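/- arXiv:1011.0233 — 4 statements merged into one kernel-verified Lean document; each statement's English description precedes it below -/
import Mathlib

section
/- For any propositional variable p, the network N_p has a solution by connected regions in which u_p is vertical w.r.t. f_p, and also a solution in which u_p is horizontal w.r.t. f_p. In particular, taking f_p = [0, 0.3] × [0.7, 1], f_{¬p} = [0, 0.6] × [0.4, 1], f_p⁰ = [0, 0.8] × [0.2, 1], and either u_p = [0, 0.2] × [0.5, 1], u_{¬p} = [0, 0.7] × [0.6, 1] (vertical case) or u_p = [0, 0.5] × [0.8, 1], u_{¬p} = [0, 0.4] × [0.3, 1] (horizontal case), there exist connected regions for the six auxiliary variables making all constraints of N_p true. -/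
/-!
All regions involved are closures of open sets. For open `V` and `U`, the interior of `closure V`
meets `closure U` iff `V` meets `U`, so each CDC constraint can be tested on open sets and open
tiles (`cdc_closure_iff`).

Write `R(p, q) = [0, p] × [q, 1]`; all the given rectangles have this form and share the upper-left
corner `(0, 1)`. As auxiliary regions take the L-shapes
`L(a, c) = [0, 1] × [0, c] ∪ [a, 1] × [0, 1]`, that is, the closure of the unit square minus
`R(a, c)`. Their bounding rectangle is the unit square, `L(a, c)` has no interior
point in `R(a, c)`, and it has interior points in `R(p, q)` as soon as `a < p` or `q < c`. Hence if
neither of `R(p, q)`, `R(p', q')` sits in the other (with strict inequalities), then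
`N_⌜(R(p, q), R(p', q'); L(p', q'), L(p, q))` holds (`netULC_rect`). The remaining constraints of
`N_p` compare nested rectangles, and everything reduces to inequalities between decimals.
-/

open Set

/-- A "region" variable ranges over subsets of the plane ℝ². -/
abbrev Reg : Type := Set (ℝ × ℝ)

/-- `x⁻(a)`: infimum of first coordinates of points of `a`. -/
noncomputable def xm (a : Reg) : ℝ := sInf (Prod.fst '' a)
/-- `x⁺(a)`: supremum of first coordinates of points of `a`. -/
noncomputable def xp (a : Reg) : ℝ := sSup (Prod.fst '' a)
/-- `y⁻(a)`: infimum of second coordinates of points of `a`. -/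
noncomputable def ym (a : Reg) : ℝ := sInf (Prod.snd '' a)
/-- `y⁺(a)`: supremum of second coordinates of points of `a`. -/
noncomputable def yp (a : Reg) : ℝ := sSup (Prod.snd '' a)

/-- `I_x(a) = [x⁻(a), x⁺(a)]`. -/
noncomputable def Ix (a : Reg) : Set ℝ := Icc (xm a) (xp a)
/-- `I_y(a) = [y⁻(a), y⁺(a)]`. -/
noncomputable def Iy (a : Reg) : Set ℝ := Icc (ym a) (yp a)
/-- Minimum bounding rectangle `M(a) = I_x(a) × I_y(a)`. -/
noncomputable def MBR (a : Reg) : Reg := Ix a ×ˢ Iy a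

/-- The nine tile names. -/
inductive Tile : Type
  | NW | N | NE | W | O | E | SW | S | SE
  deriving DecidableEq

/-- The nine tiles of a region `b`. -/
noncomputable def Tile.region : Tile → Reg → Reg
  | .O,  b => Ix b ×ˢ Iy b
  | .N,  b => Ix b ×ˢ Ici (yp b)
  | .S,  b => Ix b ×ˢ Iic (ym b)
  | .E,  b => Ici (xp b) ×ˢ Iy b
  | .W,  b => Iic (xm b) ×ˢ Iy b
  | .NE, b => Ici (xp b) ×ˢ Ici (yp b)
  | .NW, b => Iic (xm b) ×ˢ Ici (yp b)
  | .SE, b => Ici (xp b) ×ˢ Iic (ym b)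
  | .SW, b => Iic (xm b) ×ˢ Iic (ym b)

/-- The basic CDC constraint `a T b`: the set of tile names `χ` with
`interior a ∩ χ(b) ≠ ∅` is exactly `T`. -/
def cdc (a : Reg) (T : Set Tile) (b : Reg) : Prop :=
  ∀ χ : Tile, (interior a ∩ χ.region b).Nonempty ↔ χ ∈ T

/-- A region: a nonempty bounded regular closed subset of the plane. -/
def IsRegion (a : Reg) : Prop :=
  a.Nonempty ∧ Bornology.IsBounded a ∧ a = closure (interior a)

/-- A connected region: a region whose interior is connected. -/
def IsConnRegion (a : Reg) : Prop :=
  IsRegion a ∧ IsConnected (interior a)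

/-- An axis-parallel (nondegenerate, closed) rectangle. -/
def IsRect (a : Reg) : Prop :=
  ∃ x1 x2 y1 y2 : ℝ, x1 < x2 ∧ y1 < y2 ∧ a = Icc x1 x2 ×ˢ Icc y1 y2

/- Basic IA relations on intervals given by their endpoint pairs. -/
def RAs  (I J : ℝ × ℝ) : Prop := I.1 = J.1 ∧ I.2 < J.2
def RAf  (I J : ℝ × ℝ) : Prop := J.1 < I.1 ∧ I.2 = J.2
def RAsi (I J : ℝ × ℝ) : Prop := RAs J I
def RAfi (I J : ℝ × ℝ) : Prop := RAf J I
def RAo  (I J : ℝ × ℝ) : Prop := I.1 < J.1 ∧ J.1 < I.2 ∧ I.2 < J.2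
def RAeq (I J : ℝ × ℝ) : Prop := I = J

/-- `(a, b) ∈ α⊗β`: `I_x(a) α I_x(b)` and `I_y(a) β I_y(b)`. -/
def RA (α β : ℝ × ℝ → ℝ × ℝ → Prop) (a b : Reg) : Prop :=
  α (xm a, xp a) (xm b, xp b) ∧ β (ym a, yp a) (ym b, yp b)

/-- `a` is vertical w.r.t. `b`: `(a, b) ∈ s⊗fi`. -/
def Vert (a b : Reg) : Prop := RA RAs RAfi a b
/-- `a` is horizontal w.r.t. `b`: `(a, b) ∈ si⊗f`. -/
def Horiz (a b : Reg) : Prop := RA RAsi RAf a b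
/-- The upper-left-corner relation `⌜(a,b)`. -/
def ULC (a b : Reg) : Prop := Vert a b ∨ Horiz a b

/-- The network `N_⌜(u, v; w₁, w₂)`. -/
def NetULC (u v w1 w2 : Reg) : Prop :=
  cdc u {Tile.O} w1 ∧ cdc w1 {Tile.E, Tile.SE, Tile.S, Tile.O} u ∧
  cdc v {Tile.O} w1 ∧ cdc w1 {Tile.E, Tile.SE, Tile.S} v ∧
  cdc v {Tile.O} w2 ∧ cdc w2 {Tile.E, Tile.SE, Tile.S, Tile.O} v ∧
  cdc u {Tile.O} w2 ∧ cdc w2 {Tile.E, Tile.SE, Tile.S} u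

/-- The network `N_∥(u, v; w)`. -/
def NetPar (u v w : Reg) : Prop :=
  cdc u {Tile.E} w ∧ cdc w {Tile.E} v ∧ cdc v {Tile.W} u

/-- The network `N_p` for a propositional variable `p`, over the regions
`u_p, u_{¬p}, f_p, f_{¬p}, f_p⁰` and six auxiliary regions. -/
def NetP (up unp fp fnp fp0 a1 a2 b1 b2 c1 c2 : Reg) : Prop :=
  cdc up {Tile.O} fnp ∧ cdc fp {Tile.O} unp ∧
  NetULC up fp a1 a2 ∧ NetULC unp fnp b1 b2 ∧ NetULC up unp c1 c2 ∧
  cdc fp {Tile.O} fnp ∧ cdc fnp {Tile.E, Tile.SE, Tile.S, Tile.O} fp ∧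
  cdc unp {Tile.O} fp0 ∧ cdc fp0 {Tile.E, Tile.SE, Tile.S, Tile.O} unp ∧
  cdc fnp {Tile.O} fp0 ∧ cdc fp0 {Tile.E, Tile.SE, Tile.S, Tile.O} fnp

/-- The reference network `N_ref`. -/
def NetRef (wref fref fnref f0ref : Reg) : Prop :=
  cdc wref {Tile.O} fref ∧ cdc fref {Tile.O} fnref ∧ cdc fnref {Tile.O} f0ref ∧
  cdc f0ref {Tile.S, Tile.O} fnref ∧ cdc fnref {Tile.S, Tile.O} fref ∧
  cdc fref {Tile.S, Tile.O} wref

/-- An assignment of regions to all variables of the network `N_V`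
(for propositional variables `p_1, …, p_n`):
`u i, un i, f i, fn i, f0 i` are `u_i, u_{¬i}, f_i, f_{¬i}, f_i⁰`;
`a1 i, a2 i, b1 i, b2 i, c1 i, c2 i` are the six auxiliary regions of `N_{p_i}`;
`wref, fref, fnref, f0ref` are the reference regions; and
`pf i, pfn i, pf0 i` are the auxiliary regions of the parallel networks
linking `f_i` (resp. `f_{¬i}`, `f_i⁰`) to its predecessor. -/
structure VAssign (n : ℕ) where
  (u un f fn f0 : Fin n → Reg)
  (a1 a2 b1 b2 c1 c2 : Fin n → Reg)
  (wref fref fnref f0ref : Reg)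
  (pf pfn pf0 : Fin n → Reg)

/-- The predecessor in a chain: `g (i-1)` if `i > 0`, else the default `d`. -/
def prevOr {n : ℕ} (g : Fin n → Reg) (d : Reg) (i : Fin n) : Reg :=
  if 0 < i.val then g ⟨i.val - 1, lt_of_le_of_lt (Nat.sub_le _ _) i.isLt⟩ else d

/-- All the constraints of the network `N_V` hold. -/
def VAssign.Holds {n : ℕ} (S : VAssign n) : Prop :=
  (∀ i, NetP (S.u i) (S.un i) (S.f i) (S.fn i) (S.f0 i)
      (S.a1 i) (S.a2 i) (S.b1 i) (S.b2 i) (S.c1 i) (S.c2 i)) ∧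
  NetRef S.wref S.fref S.fnref S.f0ref ∧
  (∀ i, NetPar (S.f i) (prevOr S.f S.fref i) (S.pf i)) ∧
  (∀ i, NetPar (S.fn i) (prevOr S.fn S.fnref i) (S.pfn i)) ∧
  (∀ i, NetPar (S.f0 i) (prevOr S.f0 S.f0ref i) (S.pf0 i))

/-- Every region of the assignment is a connected region. -/
def VAssign.AllConn {n : ℕ} (S : VAssign n) : Prop :=
  (∀ i, IsConnRegion (S.u i) ∧ IsConnRegion (S.un i) ∧ IsConnRegion (S.f i) ∧
     IsConnRegion (S.fn i) ∧ IsConnRegion (S.f0 i) ∧ IsConnRegion (S.a1 i) ∧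
     IsConnRegion (S.a2 i) ∧ IsConnRegion (S.b1 i) ∧ IsConnRegion (S.b2 i) ∧
     IsConnRegion (S.c1 i) ∧ IsConnRegion (S.c2 i) ∧ IsConnRegion (S.pf i) ∧
     IsConnRegion (S.pfn i) ∧ IsConnRegion (S.pf0 i)) ∧
  IsConnRegion S.wref ∧ IsConnRegion S.fref ∧ IsConnRegion S.fnref ∧
  IsConnRegion S.f0ref

/-- Every region of the assignment is an axis-parallel rectangle. -/
def VAssign.AllRect {n : ℕ} (S : VAssign n) : Prop :=
  (∀ i, IsRect (S.u i) ∧ IsRect (S.un i) ∧ IsRect (S.f i) ∧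
     IsRect (S.fn i) ∧ IsRect (S.f0 i) ∧ IsRect (S.a1 i) ∧
     IsRect (S.a2 i) ∧ IsRect (S.b1 i) ∧ IsRect (S.b2 i) ∧
     IsRect (S.c1 i) ∧ IsRect (S.c2 i) ∧ IsRect (S.pf i) ∧
     IsRect (S.pfn i) ∧ IsRect (S.pf0 i)) ∧
  IsRect S.wref ∧ IsRect S.fref ∧ IsRect S.fnref ∧ IsRect S.f0ref

/-- A clause `c = p_r* ∨ p_s* ∨ p_t*` with `r < s < t`; the Booleans record
whether each literal is positive (`true`) or negative (`false`). -/
structure Clause (n : ℕ) where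
  r : Fin n
  s : Fin n
  t : Fin n
  hrs : r < s
  hst : s < t
  sr : Bool
  ss : Bool
  st : Bool

/-- An assignment of regions to the fresh variables of a clause network `N_c`:
`vc, w₀, w_rs, w_st, w₁` plus the two auxiliary regions `pa, pb` of the
parallel networks for `w₀` and `w₁`. -/
structure CAssign where
  vc : Reg
  w0 : Reg
  wrs : Reg
  wst : Reg
  w1 : Reg
  pa : Reg
  pb : Reg

/-- `u_i*`: `u_i` for a positive literal and `u_{¬i}` for a negative one. -/
def ustar {n : ℕ} (S : VAssign n) (i : Fin n) (sign : Bool) : Reg :=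
  if sign then S.u i else S.un i

/-- The frame of literal `p_i*`: `f_i` for a positive literal, `f_{¬i}` otherwise. -/
def fstar {n : ℕ} (S : VAssign n) (i : Fin n) (sign : Bool) : Reg :=
  if sign then S.f i else S.fn i

/-- All the constraints of the clause network `N_c` (including those of `N_V`). -/
def NetC {n : ℕ} (S : VAssign n) (c : Clause n) (C : CAssign) : Prop :=
  S.Holds ∧
  NetPar C.w0 S.wref C.pa ∧ NetPar C.w1 S.wref C.pb ∧
  cdc C.w0 {Tile.W, Tile.O} (S.f c.r) ∧
  cdc (S.f c.r) {Tile.E, Tile.SE, Tile.S, Tile.O} C.w0 ∧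
  (if c.sr then
    cdc (S.f c.r) {Tile.W, Tile.O} C.wrs ∧ cdc C.wrs {Tile.E, Tile.O} (S.f c.r)
   else
    cdc (S.fn c.r) {Tile.S, Tile.SW, Tile.W, Tile.O} C.wrs ∧
    cdc C.wrs {Tile.E, Tile.O} (S.fn c.r)) ∧
  cdc C.wrs {Tile.W, Tile.O} (S.f c.s) ∧ cdc (S.f c.s) {Tile.E, Tile.O} C.wrs ∧
  (if c.ss then
    cdc (S.f c.s) {Tile.W, Tile.O} C.wst ∧ cdc C.wst {Tile.E, Tile.O} (S.f c.s)
   else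
    cdc (S.fn c.s) {Tile.S, Tile.SW, Tile.W, Tile.O} C.wst ∧
    cdc C.wst {Tile.E, Tile.O} (S.fn c.s)) ∧
  cdc C.wst {Tile.W, Tile.O} (S.f c.t) ∧ cdc (S.f c.t) {Tile.E, Tile.O} C.wst ∧
  (if c.st then
    cdc (S.f c.t) {Tile.S, Tile.SW, Tile.W, Tile.O} C.w1 ∧
    cdc C.w1 {Tile.E, Tile.O} (S.f c.t)
   else
    cdc (S.fn c.t) {Tile.S, Tile.SW, Tile.W, Tile.O} C.w1 ∧
    cdc C.w1 {Tile.E, Tile.O} (S.fn c.t)) ∧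
  cdc C.w0 {Tile.O} C.vc ∧
  cdc (ustar S c.r c.sr) {Tile.O} C.vc ∧
  cdc C.wrs {Tile.O} C.vc ∧
  cdc (ustar S c.s c.ss) {Tile.O} C.vc ∧
  cdc C.wst {Tile.O} C.vc ∧
  cdc (ustar S c.t c.st) {Tile.O} C.vc ∧
  cdc C.w1 {Tile.O} C.vc ∧
  cdc C.vc {Tile.E, Tile.SE, Tile.S} C.w0 ∧
  cdc C.vc {Tile.S, Tile.SW, Tile.W} C.w1 ∧
  cdc C.vc {Tile.E, Tile.SE, Tile.S, Tile.SW, Tile.W} (ustar S c.r c.sr) ∧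
  cdc C.vc {Tile.E, Tile.SE, Tile.S, Tile.SW, Tile.W} C.wrs ∧
  cdc C.vc {Tile.E, Tile.SE, Tile.S, Tile.SW, Tile.W} (ustar S c.s c.ss) ∧
  cdc C.vc {Tile.E, Tile.SE, Tile.S, Tile.SW, Tile.W} C.wst ∧
  cdc C.vc {Tile.E, Tile.SE, Tile.S, Tile.SW, Tile.W} (ustar S c.t c.st)

/-- Every clause region is a connected region. -/
def CAssign.AllConn (C : CAssign) : Prop :=
  IsConnRegion C.vc ∧ IsConnRegion C.w0 ∧ IsConnRegion C.wrs ∧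
  IsConnRegion C.wst ∧ IsConnRegion C.w1 ∧ IsConnRegion C.pa ∧ IsConnRegion C.pb

/-- Every clause region except `v_c` is an axis-parallel rectangle. -/
def CAssign.RectExceptVc (C : CAssign) : Prop :=
  IsRect C.w0 ∧ IsRect C.wrs ∧ IsRect C.wst ∧ IsRect C.w1 ∧
  IsRect C.pa ∧ IsRect C.pb

/-! ### Testing CDC constraints on open sets -/

/-- The interior of the tile `χ` of a region with bounding rectangle `[x₁, x₂] × [y₁, y₂]`. -/
def openTile (x₁ x₂ y₁ y₂ : ℝ) : Tile → Set (ℝ × ℝ)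
  | .O => Ioo x₁ x₂ ×ˢ Ioo y₁ y₂
  | .N => Ioo x₁ x₂ ×ˢ Ioi y₂
  | .S => Ioo x₁ x₂ ×ˢ Iio y₁
  | .E => Ioi x₂ ×ˢ Ioo y₁ y₂
  | .W => Iio x₁ ×ˢ Ioo y₁ y₂
  | .NE => Ioi x₂ ×ˢ Ioi y₂
  | .NW => Iio x₁ ×ˢ Ioi y₂
  | .SE => Ioi x₂ ×ˢ Iio y₁
  | .SW => Iio x₁ ×ˢ Iio y₁

/-- `b` has bounding rectangle `[x₁, x₂] × [y₁, y₂]`, of nonempty interior. -/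
structure HasBox (b : Reg) (x₁ x₂ y₁ y₂ : ℝ) : Prop where
  hx : x₁ < x₂
  hy : y₁ < y₂
  xm_eq : xm b = x₁
  xp_eq : xp b = x₂
  ym_eq : ym b = y₁
  yp_eq : yp b = y₂

lemma isOpen_openTile (x₁ x₂ y₁ y₂ : ℝ) (χ : Tile) : IsOpen (openTile x₁ x₂ y₁ y₂ χ) := by
  cases χ <;> simp only [openTile]
  all_goals
    apply IsOpen.prod <;> first | exact isOpen_Ioo | exact isOpen_Ioi | exact isOpen_Iio

lemma HasBox.region_eq {b : Reg} {x₁ x₂ y₁ y₂ : ℝ} (h : HasBox b x₁ x₂ y₁ y₂) (χ : Tile) :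
    χ.region b = closure (openTile x₁ x₂ y₁ y₂ χ) := by
  have hx := h.hx.ne
  have hy := h.hy.ne
  cases χ <;>
    simp [Tile.region, openTile, Ix, Iy, h.xm_eq, h.xp_eq, h.ym_eq, h.yp_eq, closure_prod_eq,
      closure_Ioo hx, closure_Ioo hy]

lemma interior_closure_inter_closure {V U : Set (ℝ × ℝ)} (hV : IsOpen V) (hU : IsOpen U) :
    (interior (closure V) ∩ closure U).Nonempty ↔ (V ∩ U).Nonempty := by
  constructor
  · intro h
    have h1 : (interior (closure V) ∩ U).Nonempty :=
      (closure_inter_open_nonempty_iff isOpen_interior).1 (by rwa [inter_comm] at h) |>.mono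
        (by rw [inter_comm])
    exact (closure_inter_open_nonempty_iff hU).1
      (h1.mono (inter_subset_inter_left _ interior_subset))
  · exact fun h => h.mono (inter_subset_inter hV.subset_interior_closure subset_closure)

lemma cdc_closure_iff {V : Set (ℝ × ℝ)} (hV : IsOpen V) {b : Reg} {x₁ x₂ y₁ y₂ : ℝ}
    (h : HasBox b x₁ x₂ y₁ y₂) (T : Set Tile) :
    cdc (closure V) T b ↔ ∀ χ, (V ∩ openTile x₁ x₂ y₁ y₂ χ).Nonempty ↔ χ ∈ T := by
  unfold cdc
  simp only [h.region_eq, interior_closure_inter_closure hV (isOpen_openTile x₁ x₂ y₁ y₂ _)]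

/-- A region inside the bounding rectangle of `b` meets only the central tile of `b`. -/
lemma cdc_inside {V : Set (ℝ × ℝ)} (hV : IsOpen V) (hne : V.Nonempty) {b : Reg}
    {x₁ x₂ y₁ y₂ : ℝ} (h : HasBox b x₁ x₂ y₁ y₂) (hsub : V ⊆ Ioo x₁ x₂ ×ˢ Ioo y₁ y₂) :
    cdc (closure V) {Tile.O} b := by
  rw [cdc_closure_iff hV h]
  intro χ
  constructor
  · rintro ⟨z, hz, hz'⟩
    obtain ⟨⟨h1, h2⟩, h3, h4⟩ := hsub hz
    cases χ <;> simp [openTile] at hz' ⊢ <;> linarith [hz'.1, hz'.2]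
  · rintro rfl
    exact hne.imp fun z hz => ⟨hz, hsub hz⟩

/-- A set to the right of the left edge and below the upper edge of a rectangle meets at most the
open tiles `E`, `SE`, `S`, `O` of that rectangle. -/
lemma openTile_of_mem {V : Set (ℝ × ℝ)} {x₁ x₂ y₁ y₂ : ℝ}
    (hsub : V ⊆ Ioi x₁ ×ˢ Iio y₂) {χ : Tile}
    (h : (V ∩ openTile x₁ x₂ y₁ y₂ χ).Nonempty) :
    χ = .E ∨ χ = .SE ∨ χ = .S ∨ χ = .O := by
  obtain ⟨z, hz, hz'⟩ := h
  obtain ⟨h1, h2⟩ := hsub hz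
  simp only [mem_Ioi, mem_Iio] at h1 h2
  cases χ <;> simp [openTile] at hz' ⊢ <;> linarith [hz'.1, hz'.2]

lemma cdc_ESESO {V : Set (ℝ × ℝ)} (hV : IsOpen V) {b : Reg} {x₁ x₂ y₁ y₂ : ℝ}
    (h : HasBox b x₁ x₂ y₁ y₂) (hsub : V ⊆ Ioi x₁ ×ˢ Iio y₂)
    (hE : (V ∩ Ioi x₂ ×ˢ Ioo y₁ y₂).Nonempty) (hSE : (V ∩ Ioi x₂ ×ˢ Iio y₁).Nonempty)
    (hS : (V ∩ Ioo x₁ x₂ ×ˢ Iio y₁).Nonempty) (hO : (V ∩ Ioo x₁ x₂ ×ˢ Ioo y₁ y₂).Nonempty) :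
    cdc (closure V) {Tile.E, Tile.SE, Tile.S, Tile.O} b := by
  rw [cdc_closure_iff hV h]
  intro χ
  constructor
  · exact openTile_of_mem hsub
  · rintro (rfl | rfl | rfl | rfl)
    exacts [hE, hSE, hS, hO]

lemma cdc_ESES {V : Set (ℝ × ℝ)} (hV : IsOpen V) {b : Reg} {x₁ x₂ y₁ y₂ : ℝ}
    (h : HasBox b x₁ x₂ y₁ y₂) (hsub : V ⊆ Ioi x₁ ×ˢ Iio y₂)
    (hE : (V ∩ Ioi x₂ ×ˢ Ioo y₁ y₂).Nonempty) (hSE : (V ∩ Ioi x₂ ×ˢ Iio y₁).Nonempty)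
    (hS : (V ∩ Ioo x₁ x₂ ×ˢ Iio y₁).Nonempty)
    (hO : ¬ (V ∩ Ioo x₁ x₂ ×ˢ Ioo y₁ y₂).Nonempty) :
    cdc (closure V) {Tile.E, Tile.SE, Tile.S} b := by
  rw [cdc_closure_iff hV h]
  intro χ
  constructor
  · intro hne
    obtain rfl | rfl | rfl | rfl := openTile_of_mem hsub hne
    · simp
    · simp
    · simp
    · exact absurd hne hO
  · rintro (rfl | rfl | rfl)
    exacts [hE, hSE, hS]

/-! ### Corner rectangles and L-shapes -/

/-- The interior of `R(p, q) = [0, p] × [q, 1]`. -/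
def oRect (p q : ℝ) : Set (ℝ × ℝ) := Ioo 0 p ×ˢ Ioo q 1

/-- The interior of `L(a, c)`: the union of the open horizontal arm `(0, 1) × (0, c)` and the open
vertical arm `(a, 1) × (0, 1)`, which overlap. -/
def oEll (a c : ℝ) : Set (ℝ × ℝ) := Ioo 0 1 ×ˢ Ioo 0 c ∪ Ioo a 1 ×ˢ Ioo 0 1

lemma isOpen_oRect (p q : ℝ) : IsOpen (oRect p q) := isOpen_Ioo.prod isOpen_Ioo

lemma isOpen_oEll (a c : ℝ) : IsOpen (oEll a c) :=
  (isOpen_Ioo.prod isOpen_Ioo).union (isOpen_Ioo.prod isOpen_Ioo)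

lemma closure_oRect {p q : ℝ} (hp : 0 < p) (hq : q < 1) :
    closure (oRect p q) = Icc 0 p ×ˢ Icc q 1 := by
  rw [oRect, closure_prod_eq, closure_Ioo hp.ne, closure_Ioo hq.ne]

lemma closure_oEll {a c : ℝ} (ha : a < 1) (hc : 0 < c) :
    closure (oEll a c) = Icc 0 1 ×ˢ Icc 0 c ∪ Icc a 1 ×ˢ Icc 0 1 := by
  rw [oEll, closure_union, closure_prod_eq, closure_prod_eq, closure_Ioo ha.ne, closure_Ioo hc.ne,
    closure_Ioo zero_ne_one]

lemma hasBox_oRect {p q : ℝ} (hp : 0 < p) (hq : q < 1) :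
    HasBox (closure (oRect p q)) 0 p q 1 := by
  rw [closure_oRect hp hq]
  have h1 : (Icc 0 p : Set ℝ).Nonempty := nonempty_Icc.2 hp.le
  have h2 : (Icc q 1 : Set ℝ).Nonempty := nonempty_Icc.2 hq.le
  refine ⟨hp, hq, ?_, ?_, ?_, ?_⟩
  · rw [xm, fst_image_prod _ h2, csInf_Icc hp.le]
  · rw [xp, fst_image_prod _ h2, csSup_Icc hp.le]
  · rw [ym, snd_image_prod h1, csInf_Icc hq.le]
  · rw [yp, snd_image_prod h1, csSup_Icc hq.le]

lemma hasBox_oEll {a c : ℝ} (ha0 : 0 < a) (ha : a < 1) (hc : 0 < c) (hc1 : c < 1) :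
    HasBox (closure (oEll a c)) 0 1 0 1 := by
  rw [closure_oEll ha hc]
  have h01 : (0 : ℝ) ≤ 1 := zero_le_one
  have hfst : Prod.fst '' (Icc (0 : ℝ) 1 ×ˢ Icc 0 c ∪ Icc a 1 ×ˢ Icc (0 : ℝ) 1) = Icc 0 1 := by
    rw [image_union, fst_image_prod _ (nonempty_Icc.2 hc.le),
      fst_image_prod _ (nonempty_Icc.2 h01), union_eq_left]
    exact Icc_subset_Icc_left ha0.le
  have hsnd : Prod.snd '' (Icc (0 : ℝ) 1 ×ˢ Icc 0 c ∪ Icc a 1 ×ˢ Icc (0 : ℝ) 1) = Icc 0 1 := by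
    rw [image_union, snd_image_prod (nonempty_Icc.2 h01),
      snd_image_prod (nonempty_Icc.2 ha.le), union_eq_right]
    exact Icc_subset_Icc_right hc1.le
  refine ⟨zero_lt_one, zero_lt_one, ?_, ?_, ?_, ?_⟩
  · rw [xm, hfst, csInf_Icc h01]
  · rw [xp, hfst, csSup_Icc h01]
  · rw [ym, hsnd, csInf_Icc h01]
  · rw [yp, hsnd, csSup_Icc h01]

lemma oEll_subset {a c : ℝ} (ha : 0 < a) (hc : c < 1) :
    oEll a c ⊆ Ioo 0 1 ×ˢ Ioo 0 1 :=
  union_subset (prod_mono_right (Ioo_subset_Ioo_right hc.le))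
    (prod_mono_left (Ioo_subset_Ioo_left ha.le))

lemma oEll_subset_quadrant {a c : ℝ} (ha : 0 < a) (hc : c < 1) :
    oEll a c ⊆ Ioi 0 ×ˢ Iio 1 :=
  (oEll_subset ha hc).trans (prod_mono Ioo_subset_Ioi_self Ioo_subset_Iio_self)

lemma isConnRegion_oEll {a c : ℝ} (ha0 : 0 < a) (ha : a < 1) (hc : 0 < c) (hc1 : c < 1) :
    IsConnRegion (closure (oEll a c)) := by
  have hconn : IsConnected (oEll a c) := by
    obtain ⟨x, hx, hx1⟩ := exists_between ha
    obtain ⟨y, hy, hyc⟩ := exists_between hc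
    have h1 : ((x, y) : ℝ × ℝ) ∈ Ioo (0 : ℝ) 1 ×ˢ Ioo 0 c := ⟨⟨ha0.trans hx, hx1⟩, hy, hyc⟩
    have h2 : ((x, y) : ℝ × ℝ) ∈ Ioo a 1 ×ˢ Ioo (0 : ℝ) 1 := ⟨⟨hx, hx1⟩, hy, hyc.trans hc1⟩
    exact ⟨⟨_, Or.inl h1⟩, IsPreconnected.union _ h1 h2
      (isPreconnected_Ioo.prod isPreconnected_Ioo) (isPreconnected_Ioo.prod isPreconnected_Ioo)⟩
  have hsub := (isOpen_oEll a c).subset_interior_closure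
  refine ⟨⟨hconn.nonempty.closure, ?_, ?_⟩, hconn.subset_closure hsub interior_subset⟩
  · exact (((Metric.isBounded_Ioo 0 1).prod (Metric.isBounded_Ioo 0 1)).subset
      (oEll_subset ha0 hc1)).closure
  · exact (closure_mono hsub).antisymm (closure_minimal interior_subset isClosed_closure)

/-! ### The constraints between corner rectangles and L-shapes -/

lemma rect_inside_rect {p q p' q' : ℝ} (hp : 0 < p) (hq : q < 1) (hpp : p ≤ p') (hqq : q' ≤ q) :
    cdc (closure (oRect p q)) {Tile.O} (closure (oRect p' q')) :=
  cdc_inside (isOpen_oRect p q) ((nonempty_Ioo.2 hp).prod (nonempty_Ioo.2 hq))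
    (hasBox_oRect (hp.trans_le hpp) (hqq.trans_lt hq))
    (prod_mono (Ioo_subset_Ioo_right hpp) (Ioo_subset_Ioo_left hqq))

lemma rect_around_rect {p q p' q' : ℝ} (hp : 0 < p) (hq : q < 1) (hpp : p < p') (hqq : q' < q) :
    cdc (closure (oRect p' q')) {Tile.E, Tile.SE, Tile.S, Tile.O} (closure (oRect p q)) := by
  obtain ⟨x, hx, hxp⟩ := exists_between hp
  obtain ⟨X, hX, hXp⟩ := exists_between hpp
  obtain ⟨Y, hY, hYq⟩ := exists_between hq
  obtain ⟨y, hy, hyq⟩ := exists_between hqq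
  have hx' : x ∈ Ioo 0 p' := ⟨hx, by linarith⟩
  have hX' : X ∈ Ioo 0 p' := ⟨by linarith, hXp⟩
  have hy' : y ∈ Ioo q' 1 := ⟨hy, by linarith⟩
  have hY' : Y ∈ Ioo q' 1 := ⟨by linarith, hYq⟩
  exact cdc_ESESO (isOpen_oRect p' q') (hasBox_oRect hp hq)
    (prod_mono Ioo_subset_Ioi_self Ioo_subset_Iio_self)
    ⟨(X, Y), ⟨hX', hY'⟩, hX, hY, hYq⟩ ⟨(X, y), ⟨hX', hy'⟩, hX, hyq⟩
    ⟨(x, y), ⟨hx', hy'⟩, ⟨hx, hxp⟩, hyq⟩ ⟨(x, Y), ⟨hx', hY'⟩, ⟨hx, hxp⟩, hY, hYq⟩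

lemma rect_inside_ell {p q a c : ℝ} (hp : 0 < p) (hp1 : p < 1) (hq0 : 0 < q) (hq : q < 1)
    (ha0 : 0 < a) (ha : a < 1) (hc : 0 < c) (hc1 : c < 1) :
    cdc (closure (oRect p q)) {Tile.O} (closure (oEll a c)) :=
  cdc_inside (isOpen_oRect p q) ((nonempty_Ioo.2 hp).prod (nonempty_Ioo.2 hq))
    (hasBox_oEll ha0 ha hc hc1)
    (prod_mono (Ioo_subset_Ioo_right hp1.le) (Ioo_subset_Ioo_left hq0.le))

/-- An L-shape meets the tiles `E`, `SE` and `S` of every corner rectangle. -/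
lemma ell_meets {p q a c : ℝ} (hp : 0 < p) (hp1 : p < 1) (hq0 : 0 < q) (hq : q < 1)
    (ha0 : 0 < a) (ha : a < 1) (hc : 0 < c) :
    (oEll a c ∩ Ioi p ×ˢ Ioo q 1).Nonempty ∧ (oEll a c ∩ Ioi p ×ˢ Iio q).Nonempty ∧
      (oEll a c ∩ Ioo 0 p ×ˢ Iio q).Nonempty := by
  obtain ⟨x, hx, hxp⟩ := exists_between hp
  obtain ⟨X, hX, hX1⟩ := exists_between (max_lt hp1 ha)
  obtain ⟨y, hy, hyq⟩ := exists_between (lt_min hq0 hc)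
  obtain ⟨Y, hY, hY1⟩ := exists_between hq
  obtain ⟨hXp, hXa⟩ := max_lt_iff.1 hX
  obtain ⟨hyq, hyc⟩ := lt_min_iff.1 hyq
  exact ⟨⟨(X, Y), Or.inr ⟨⟨hXa, hX1⟩, hq0.trans hY, hY1⟩, hXp, hY, hY1⟩,
    ⟨(X, y), Or.inl ⟨⟨ha0.trans hXa, hX1⟩, hy, hyc⟩, hXp, hyq⟩,
    ⟨(x, y), Or.inl ⟨⟨hx, hxp.trans hp1⟩, hy, hyc⟩, ⟨hx, hxp⟩, hyq⟩⟩

lemma ell_around_rect {p q a c : ℝ} (hp : 0 < p) (hp1 : p < 1) (hq0 : 0 < q) (hq : q < 1)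
    (ha0 : 0 < a) (ha : a < 1) (hc : 0 < c) (hc1 : c < 1) (h : a < p ∨ q < c) :
    cdc (closure (oEll a c)) {Tile.E, Tile.SE, Tile.S, Tile.O} (closure (oRect p q)) := by
  obtain ⟨hE, hSE, hS⟩ := ell_meets hp hp1 hq0 hq ha0 ha hc
  refine cdc_ESESO (isOpen_oEll a c) (hasBox_oRect hp hq) (oEll_subset_quadrant ha0 hc1)
    hE hSE hS ?_
  obtain h | h := h
  · obtain ⟨x, hx, hxp⟩ := exists_between h
    obtain ⟨y, hy, hy1⟩ := exists_between hq
    exact ⟨(x, y), Or.inr ⟨⟨hx, hxp.trans hp1⟩, hq0.trans hy, hy1⟩,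
      ⟨ha0.trans hx, hxp⟩, hy, hy1⟩
  · obtain ⟨x, hx, hxp⟩ := exists_between hp
    obtain ⟨y, hy, hyc⟩ := exists_between h
    exact ⟨(x, y), Or.inl ⟨⟨hx, hxp.trans hp1⟩, hq0.trans hy, hyc⟩,
      ⟨hx, hxp⟩, hy, hyc.trans hc1⟩

lemma ell_avoids_rect {p q : ℝ} (hp : 0 < p) (hp1 : p < 1) (hq0 : 0 < q) (hq : q < 1) :
    cdc (closure (oEll p q)) {Tile.E, Tile.SE, Tile.S} (closure (oRect p q)) := by
  obtain ⟨hE, hSE, hS⟩ := ell_meets hp hp1 hq0 hq hp hp1 hq0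
  refine cdc_ESES (isOpen_oEll p q) (hasBox_oRect hp hq) (oEll_subset_quadrant hp hq)
    hE hSE hS ?_
  rintro ⟨z, h | h, hR⟩
  · exact lt_asymm h.2.2 hR.2.1
  · exact lt_asymm h.1.1 hR.1.2

/-- If one of two corner rectangles is strictly wider and the other strictly taller, they satisfy the
upper-left-corner network: the first auxiliary region, which must meet `u` but not `v`, is the
L-shape that `v` leaves in the unit square, and the second is the one that `u` leaves. -/
lemma netULC_rect {p q p' q' : ℝ} (hp : 0 < p) (hp1 : p < 1) (hq0 : 0 < q) (hq : q < 1)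
    (hp' : 0 < p') (hp1' : p' < 1) (hq0' : 0 < q') (hq' : q' < 1)
    (h : p < p' ∧ q < q' ∨ p' < p ∧ q' < q) :
    NetULC (closure (oRect p q)) (closure (oRect p' q'))
      (closure (oEll p' q')) (closure (oEll p q)) :=
  ⟨rect_inside_ell hp hp1 hq0 hq hp' hp1' hq0' hq',
    ell_around_rect hp hp1 hq0 hq hp' hp1' hq0' hq' (h.symm.imp And.left And.right),
    rect_inside_ell hp' hp1' hq0' hq' hp' hp1' hq0' hq',
    ell_avoids_rect hp' hp1' hq0' hq',
    rect_inside_ell hp' hp1' hq0' hq' hp hp1 hq0 hq,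
    ell_around_rect hp' hp1' hq0' hq' hp hp1 hq0 hq (h.imp And.left And.right),
    rect_inside_ell hp hp1 hq0 hq hp hp1 hq0 hq,
    ell_avoids_rect hp hp1 hq0 hq⟩

/-- `N_p` has a solution by connected regions in which `u_p` is
vertical w.r.t. `f_p`, and also one in which `u_p` is horizontal w.r.t. `f_p`;
in particular with the explicitly given rectangles, suitable connected regions
exist for the six auxiliary variables in each case. -/
theorem stmt9 (fp fnp fp0 upV unV upH unH : Reg)
    (hfp : fp = Icc (0:ℝ) 0.3 ×ˢ Icc (0.7:ℝ) 1)
    (hfnp : fnp = Icc (0:ℝ) 0.6 ×ˢ Icc (0.4:ℝ) 1)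
    (hfp0 : fp0 = Icc (0:ℝ) 0.8 ×ˢ Icc (0.2:ℝ) 1)
    (hupV : upV = Icc (0:ℝ) 0.2 ×ˢ Icc (0.5:ℝ) 1)
    (hunV : unV = Icc (0:ℝ) 0.7 ×ˢ Icc (0.6:ℝ) 1)
    (hupH : upH = Icc (0:ℝ) 0.5 ×ˢ Icc (0.8:ℝ) 1)
    (hunH : unH = Icc (0:ℝ) 0.4 ×ˢ Icc (0.3:ℝ) 1) :
    (Vert upV fp ∧
      ∃ a1 a2 b1 b2 c1 c2 : Reg,
        IsConnRegion a1 ∧ IsConnRegion a2 ∧ IsConnRegion b1 ∧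
        IsConnRegion b2 ∧ IsConnRegion c1 ∧ IsConnRegion c2 ∧
        NetP upV unV fp fnp fp0 a1 a2 b1 b2 c1 c2) ∧
    (Horiz upH fp ∧
      ∃ a1 a2 b1 b2 c1 c2 : Reg,
        IsConnRegion a1 ∧ IsConnRegion a2 ∧ IsConnRegion b1 ∧
        IsConnRegion b2 ∧ IsConnRegion c1 ∧ IsConnRegion c2 ∧
        NetP upH unH fp fnp fp0 a1 a2 b1 b2 c1 c2) := by
  rw [← closure_oRect (by norm_num) (by norm_num)] at hfp hfnp hfp0 hupV hunV hupH hunH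
  subst hfp hfnp hfp0 hupV hunV hupH hunH
  refine ⟨⟨?_, _, _, _, _, _, _, ?_, ?_, ?_, ?_, ?_, ?_,
      rect_inside_rect ?_ ?_ ?_ ?_, rect_inside_rect ?_ ?_ ?_ ?_,
      netULC_rect ?_ ?_ ?_ ?_ ?_ ?_ ?_ ?_ ?_, netULC_rect ?_ ?_ ?_ ?_ ?_ ?_ ?_ ?_ ?_,
      netULC_rect ?_ ?_ ?_ ?_ ?_ ?_ ?_ ?_ ?_,
      rect_inside_rect ?_ ?_ ?_ ?_, rect_around_rect ?_ ?_ ?_ ?_,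
      rect_inside_rect ?_ ?_ ?_ ?_, rect_around_rect ?_ ?_ ?_ ?_,
      rect_inside_rect ?_ ?_ ?_ ?_, rect_around_rect ?_ ?_ ?_ ?_⟩,
    ⟨?_, _, _, _, _, _, _, ?_, ?_, ?_, ?_, ?_, ?_,
      rect_inside_rect ?_ ?_ ?_ ?_, rect_inside_rect ?_ ?_ ?_ ?_,
      netULC_rect ?_ ?_ ?_ ?_ ?_ ?_ ?_ ?_ ?_, netULC_rect ?_ ?_ ?_ ?_ ?_ ?_ ?_ ?_ ?_,
      netULC_rect ?_ ?_ ?_ ?_ ?_ ?_ ?_ ?_ ?_,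
      rect_inside_rect ?_ ?_ ?_ ?_, rect_around_rect ?_ ?_ ?_ ?_,
      rect_inside_rect ?_ ?_ ?_ ?_, rect_around_rect ?_ ?_ ?_ ?_,
      rect_inside_rect ?_ ?_ ?_ ?_, rect_around_rect ?_ ?_ ?_ ?_⟩⟩
  all_goals first
    | norm_num; done
    | apply isConnRegion_oEll <;> norm_num
    | skip
  · have hu := hasBox_oRect (p := 0.2) (q := 0.5) (by norm_num) (by norm_num)
    have hf := hasBox_oRect (p := 0.3) (q := 0.7) (by norm_num) (by norm_num)
    simp only [Vert, RA, RAs, RAfi, RAf, hu.xm_eq, hu.xp_eq, hu.ym_eq, hu.yp_eq,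
      hf.xm_eq, hf.xp_eq, hf.ym_eq, hf.yp_eq]
    norm_num
  · have hu := hasBox_oRect (p := 0.5) (q := 0.8) (by norm_num) (by norm_num)
    have hf := hasBox_oRect (p := 0.3) (q := 0.7) (by norm_num) (by norm_num)
    simp only [Horiz, RA, RAsi, RAs, RAf, hu.xm_eq, hu.xp_eq, hu.ym_eq, hu.yp_eq,
      hf.xm_eq, hf.xp_eq, hf.ym_eq, hf.yp_eq]
    norm_num
end

section
/- Let x and v be regions. (i) If the basic CDC constraints x O v and v E:SE:S x hold, then M(v) and M(x) share the same upper-left corner point, i.e. x⁻(v) = x⁻(x) and y⁺(v) = y⁺(x). (ii) If the basic CDC constraints x O v and v S:SW:W x hold, then M(v) and M(x) share the same upper-right corner point, i.e. x⁺(v) = x⁺(x) and y⁺(v) = y⁺(x). -/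
/-!
The nine tiles of a region `b` cover the plane, so a constraint `a T b` places every interior
point of `a` in one of the tiles named by `T`; a coordinate bound satisfied on these tiles
therefore holds on `interior a`. Since `a = closure (interior a)`, it passes to the extremal
coordinates of `a` (`IsRegion.le_xm`, `IsRegion.xp_le`,
`IsRegion.yp_le`).

From `x O v` one gets `M(x) ⊆ M(v)`. From `v E:SE:S x`, the region `v` lies to the right of
`x⁻(x)` and below `y⁺(x)`; from `v S:SW:W x`, to the left of `x⁺(x)` and below `y⁺(x)`. The two
families of inequalities force the stated equalities.
-/

open Set

theorem Tile.exists_mem_region (b : Reg) (p : ℝ × ℝ) : ∃ χ : Tile, p ∈ χ.region b := by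
  have hcover : ∀ l r t : ℝ, t ≤ l ∨ (l ≤ t ∧ t ≤ r) ∨ r ≤ t := by
    intro l r t
    rcases le_total t l with h | h
    · exact Or.inl h
    · rcases le_total t r with h' | h'
      · exact Or.inr (Or.inl ⟨h, h'⟩)
      · exact Or.inr (Or.inr h')
  rcases hcover (xm b) (xp b) p.1 with h1 | h1 | h1 <;>
    rcases hcover (ym b) (yp b) p.2 with h2 | h2 | h2
  · exact ⟨.SW, h1, h2⟩
  · exact ⟨.W, h1, h2⟩
  · exact ⟨.NW, h1, h2⟩
  · exact ⟨.S, h1, h2⟩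
  · exact ⟨.O, h1, h2⟩
  · exact ⟨.N, h1, h2⟩
  · exact ⟨.SE, h1, h2⟩
  · exact ⟨.E, h1, h2⟩
  · exact ⟨.NE, h1, h2⟩

theorem cdc.exists_tile {a b : Reg} {T : Set Tile} (h : cdc a T b) {p : ℝ × ℝ}
    (hp : p ∈ interior a) : ∃ χ ∈ T, p ∈ χ.region b := by
  obtain ⟨χ, hχ⟩ := Tile.exists_mem_region b p
  exact ⟨χ, (h χ).1 ⟨p, hp, hχ⟩, hχ⟩

/-- A closed condition on the interior of a region holds on the whole region. -/
theorem IsRegion.subset_of_interior_subset {a : Reg} (ha : IsRegion a) {C : Set (ℝ × ℝ)}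
    (hC : IsClosed C) (h : interior a ⊆ C) : a ⊆ C := by
  rw [ha.2.2]
  exact closure_minimal h hC

theorem IsRegion.le_xm {a : Reg} (ha : IsRegion a) {c : ℝ}
    (h : ∀ p ∈ interior a, c ≤ p.1) : c ≤ xm a := by
  have hsub : a ⊆ {p | c ≤ p.1} :=
    ha.subset_of_interior_subset (isClosed_le continuous_const continuous_fst) h
  exact le_csInf (ha.1.image _) (by rintro _ ⟨p, hp, rfl⟩; exact hsub hp)

theorem IsRegion.xp_le {a : Reg} (ha : IsRegion a) {c : ℝ}
    (h : ∀ p ∈ interior a, p.1 ≤ c) : xp a ≤ c := by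
  have hsub : a ⊆ {p | p.1 ≤ c} :=
    ha.subset_of_interior_subset (isClosed_le continuous_fst continuous_const) h
  exact csSup_le (ha.1.image _) (by rintro _ ⟨p, hp, rfl⟩; exact hsub hp)

theorem IsRegion.yp_le {a : Reg} (ha : IsRegion a) {c : ℝ}
    (h : ∀ p ∈ interior a, p.2 ≤ c) : yp a ≤ c := by
  have hsub : a ⊆ {p | p.2 ≤ c} :=
    ha.subset_of_interior_subset (isClosed_le continuous_snd continuous_const) h
  exact csSup_le (ha.1.image _) (by rintro _ ⟨p, hp, rfl⟩; exact hsub hp)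

theorem IsRegion.xm_le_xp {a : Reg} (ha : IsRegion a) : xm a ≤ xp a :=
  Real.sInf_le_sSup _ ha.2.1.image_fst.bddBelow ha.2.1.image_fst.bddAbove

theorem IsRegion.ym_le_yp {a : Reg} (ha : IsRegion a) : ym a ≤ yp a :=
  Real.sInf_le_sSup _ ha.2.1.image_snd.bddBelow ha.2.1.image_snd.bddAbove

/-- (i) If regions `x, v` satisfy `x O v` and `v E:SE:S x`, then
`M(v)` and `M(x)` share the same upper-left corner point. (ii) If they satisfy
`x O v` and `v S:SW:W x`, then `M(v)` and `M(x)` share the same upper-right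
corner point. -/
theorem stmt10 (x v : Reg) (hx : IsRegion x) (hv : IsRegion v) :
    ((cdc x {Tile.O} v ∧ cdc v {Tile.E, Tile.SE, Tile.S} x) →
      xm v = xm x ∧ yp v = yp x) ∧
    ((cdc x {Tile.O} v ∧ cdc v {Tile.S, Tile.SW, Tile.W} x) →
      xp v = xp x ∧ yp v = yp x) := by
  have hX := hx.xm_le_xp
  have hY := hx.ym_le_yp
  have inO : cdc x {Tile.O} v → ∀ p ∈ interior x, p ∈ Ix v ×ˢ Iy v := by
    intro h p hp
    obtain ⟨χ, rfl, hχ⟩ := h.exists_tile hp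
    exact hχ
  refine ⟨fun ⟨hO, hT⟩ => ?_, fun ⟨hO, hT⟩ => ?_⟩
  · have hin : ∀ p ∈ interior v, xm x ≤ p.1 ∧ p.2 ≤ yp x := by
      intro p hp
      obtain ⟨χ, rfl | rfl | rfl, h1, h2⟩ := hT.exists_tile hp
      · exact ⟨hX.trans h1, h2.2⟩
      · exact ⟨hX.trans h1, le_trans h2 hY⟩
      · exact ⟨h1.1, le_trans h2 hY⟩
    exact ⟨le_antisymm (hx.le_xm fun p hp => (inO hO p hp).1.1) (hv.le_xm fun p hp => (hin p hp).1),
      le_antisymm (hv.yp_le fun p hp => (hin p hp).2) (hx.yp_le fun p hp => (inO hO p hp).2.2)⟩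
  · have hin : ∀ p ∈ interior v, p.1 ≤ xp x ∧ p.2 ≤ yp x := by
      intro p hp
      obtain ⟨χ, rfl | rfl | rfl, h1, h2⟩ := hT.exists_tile hp
      · exact ⟨h1.2, le_trans h2 hY⟩
      · exact ⟨le_trans h1 hX, le_trans h2 hY⟩
      · exact ⟨le_trans h1 hX, h2.2⟩
    exact ⟨le_antisymm (hv.xp_le fun p hp => (hin p hp).1) (hx.xp_le fun p hp => (inO hO p hp).1.2),
      le_antisymm (hv.yp_le fun p hp => (hin p hp).2) (hx.yp_le fun p hp => (inO hO p hp).2.2)⟩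
end

section
/- (Gap lemma.) Let k ≥ 2 and let v, x₁, …, x_k be regions satisfying the basic CDC constraints: xᵢ O v for every 1 ≤ i ≤ k; v E:SE:S x₁; v S:SW:W x_k; and v E:SE:S:SW:W xᵢ for every 1 < i < k. Then there exists some 1 ≤ i < k with x⁺(xᵢ) < x⁻(x_{i+1}); that is, the x-projections of x₁, …, x_k cannot consecutively overlap with no gap. -/
/-!
The relations between `v` and each `xᵢ` exclude the tiles `O`, `N`, `NE`, `NW`, so every interior
point of `v` lies strictly below `y⁺(xᵢ)`; and since `E` or `W` of `xᵢ` is met, some interior point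
of `v` has ordinate at least `y⁻(xᵢ)`. Choosing this for the `xᵢ` with the largest `y⁻(xᵢ)` gives
one interior point `q` of `v` whose ordinate lies in every `I_y(xᵢ)`. Hence the abscissa of `q`
avoids every `I_x(xᵢ)`. It is to the right of `x₀` (tile `W` is excluded there), and if there is no
gap between consecutive projections it cannot jump from the right of `xᵢ` to the left of `xᵢ₊₁`.
So `q` is to the right of `x_{k-1}`, whose tile `E` is excluded: a contradiction.
-/

open Set

/-- If none of the three northern tiles of `b` is met, all interior points of `v` lie below
`y⁺(b)`, as these tiles cover the half-plane above it. -/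
lemma snd_lt_yp {v b : Reg} (hN : ¬ (interior v ∩ Tile.N.region b).Nonempty)
    (hNE : ¬ (interior v ∩ Tile.NE.region b).Nonempty)
    (hNW : ¬ (interior v ∩ Tile.NW.region b).Nonempty) {q : ℝ × ℝ} (hq : q ∈ interior v) :
    q.2 < yp b := by
  by_contra! h
  rcases le_total q.1 (xm b) with h1 | h1
  · exact hNW ⟨q, hq, h1, h⟩
  rcases le_total (xp b) q.1 with h2 | h2
  · exact hNE ⟨q, hq, h2, h⟩
  · exact hN ⟨q, hq, ⟨h1, h2⟩, h⟩

/-- Gap lemma: If regions `v, x₀, …, x_{k-1}` (`k ≥ 2`) satisfy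
`xᵢ O v` for all `i < k`, `v E:SE:S x₀`, `v S:SW:W x_{k-1}`, and
`v E:SE:S:SW:W xᵢ` for `0 < i < k-1`, then for some `i` with `i+1 < k` we have
`x⁺(xᵢ) < x⁻(x_{i+1})`: the x-projections cannot consecutively overlap with
no gap. -/
theorem stmt11 (k : ℕ) (hk : 2 ≤ k) (v : Reg) (x : ℕ → Reg)
    (hv : IsRegion v) (hx : ∀ i < k, IsRegion (x i))
    (h1 : ∀ i < k, cdc (x i) {Tile.O} v)
    (h2 : cdc v {Tile.E, Tile.SE, Tile.S} (x 0))
    (h3 : cdc v {Tile.S, Tile.SW, Tile.W} (x (k - 1)))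
    (h4 : ∀ i, 0 < i → i < k - 1 →
      cdc v {Tile.E, Tile.SE, Tile.S, Tile.SW, Tile.W} (x i)) :
    ∃ i, i + 1 < k ∧ xp (x i) < xm (x (i + 1)) := by
  by_contra! hgap
  have hcases : ∀ i < k, i = 0 ∨ i = k - 1 ∨ (0 < i ∧ i < k - 1) := by
    intro i hi; omega
  have hO : ∀ i < k, ¬ (interior v ∩ Tile.O.region (x i)).Nonempty := by
    intro i hi
    rcases hcases i hi with rfl | rfl | ⟨ha, hb⟩
    · simp [h2 Tile.O]
    · simp [h3 Tile.O]
    · simp [h4 i ha hb Tile.O]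
  have hN : ∀ i < k, ∀ q ∈ interior v, q.2 < yp (x i) := by
    intro i hi
    rcases hcases i hi with rfl | rfl | ⟨ha, hb⟩
    · exact fun q => snd_lt_yp (by simp [h2 Tile.N]) (by simp [h2 Tile.NE]) (by simp [h2 Tile.NW])
    · exact fun q => snd_lt_yp (by simp [h3 Tile.N]) (by simp [h3 Tile.NE]) (by simp [h3 Tile.NW])
    · exact fun q => snd_lt_yp (by simp [h4 i ha hb Tile.N]) (by simp [h4 i ha hb Tile.NE])
        (by simp [h4 i ha hb Tile.NW])
  have hEW : ∀ i < k, ∃ q ∈ interior v, ym (x i) ≤ q.2 := by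
    intro i hi
    rcases hcases i hi with rfl | rfl | ⟨ha, hb⟩
    · obtain ⟨q, hq, hq'⟩ := (h2 Tile.E).2 (by simp)
      exact ⟨q, hq, hq'.2.1⟩
    · obtain ⟨q, hq, hq'⟩ := (h3 Tile.W).2 (by simp)
      exact ⟨q, hq, hq'.2.1⟩
    · obtain ⟨q, hq, hq'⟩ := (h4 i ha hb Tile.E).2 (by simp)
      exact ⟨q, hq, hq'.2.1⟩
  -- The region with the highest lower edge yields a point in all horizontal strips at once.
  obtain ⟨j, hj, hmax⟩ := Finset.exists_max_image (Finset.range k) (fun i => ym (x i))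
    ⟨0, by simp; omega⟩
  obtain ⟨q, hqv, hqj⟩ := hEW j (by simpa using hj)
  have hy : ∀ i < k, q.2 ∈ Iy (x i) := fun i hi =>
    ⟨(hmax i (by simpa using hi)).trans hqj, (hN i hi q hqv).le⟩
  have hright : ∀ i, i < k → xp (x i) < q.1 := by
    intro i
    induction i with
    | zero =>
      intro hi
      by_contra! hle
      rcases le_total q.1 (xm (x 0)) with h | h
      · simpa using (h2 Tile.W).1 ⟨q, hqv, h, hy 0 hi⟩
      · exact hO 0 hi ⟨q, hqv, ⟨h, hle⟩, hy 0 hi⟩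
    | succ n ih =>
      intro hi
      by_contra! hle
      have hn := ih (by omega)
      exact hO (n + 1) hi ⟨q, hqv, ⟨(hgap n hi).trans hn.le, hle⟩, hy (n + 1) hi⟩
  have hlast : k - 1 < k := by omega
  simpa using (h3 Tile.E).1 ⟨q, hqv, (hright _ hlast).le, hy _ hlast⟩
end

section
/- (Bridging.) Let c = p_r* ∨ p_s* ∨ p_t* (1 ≤ r < s < t ≤ n) be a clause and consider any solution of N_c by connected regions. If u_r* is horizontal w.r.t. its frame (f_r if p_r* = p_r, and f_{¬r} otherwise), then I_x(u_r*) overlaps both I_x(w₀) and I_x(w_rs): x⁻(u_r*) < x⁺(w₀) and x⁺(u_r*) > x⁻(w_rs). Analogously, if u_s* is horizontal w.r.t. its frame then x⁻(u_s*) < x⁺(w_rs) and x⁺(u_s*) > x⁻(w_st); and if u_t* is horizontal w.r.t. its frame then x⁻(u_t*) < x⁺(w_st) and x⁺(u_t*) > x⁻(w₁). -/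
/-!
A horizontal `u` shares its left edge with its frame and extends strictly beyond the frame's right
edge, so it suffices to bridge the gaps between the frame and its two neighbouring regions.
If an interior point of `a` lies in the central tile `O(b)`, then `x⁻(b) < x⁺(a)`, since an open
set never attains its supremum (`xm_lt_xp_of_cdc`). The right-hand overlap follows at once, because
the frame meets the central tile of its right neighbour. On the left, the constraints speak of
`f_i`, which is the frame of a positive literal; for a negative literal, `f_i O f_{¬i}` gives
`x⁻(f_{¬i}) ≤ x⁻(f_i)` (`xm_le_of_cdc_O`), which transfers the inequality to `f_{¬i}`.
-/

open Set

/-- An interior point of a bounded set lies strictly to the left of its right edge. -/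
lemma fst_lt_xp {a : Reg} (ha : Bornology.IsBounded a) {p : ℝ × ℝ} (hp : p ∈ interior a) :
    p.1 < xp a := by
  have hbdd : BddAbove (Prod.fst '' a) := ha.image_fst.bddAbove
  -- The projection is an open map, so it sends the interior to an open set of reals.
  have hopen : IsOpen (Prod.fst '' interior a) := isOpenMap_fst _ isOpen_interior
  obtain ⟨x, hx, hpx⟩ := ((hopen.eventually_mem (mem_image_of_mem _ hp)).filter_mono
    nhdsWithin_le_nhds |>.and (self_mem_nhdsWithin (s := Ioi p.1))).exists
  exact lt_of_lt_of_le hpx (le_csSup hbdd (image_mono interior_subset hx))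

lemma xm_lt_xp_of_cdc {a b : Reg} {T : Set Tile} (ha : IsConnRegion a) (h : cdc a T b)
    (hT : Tile.O ∈ T) : xm b < xp a := by
  obtain ⟨p, hp, hpO⟩ := (h Tile.O).2 hT
  exact lt_of_le_of_lt hpO.1.1 (fst_lt_xp ha.1.2.1 hp)

/-- If `a O b`, then `a` does not reach to the left of `b`: its interior avoids the three western
tiles, which cover the half-plane to the left of `b`. -/
lemma xm_le_of_cdc_O {a b : Reg} (ha : IsConnRegion a) (h : cdc a {Tile.O} b) :
    xm b ≤ xm a := by
  refine le_csInf (ha.1.1.image _) ?_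
  rintro _ ⟨q, hq, rfl⟩
  have hsub : closure (interior a) ⊆ {p : ℝ × ℝ | xm b ≤ p.1} := by
    refine closure_minimal ?_ (isClosed_le continuous_const continuous_fst)
    intro p hp
    by_contra hlt
    have hx : p.1 ≤ xm b := (not_le.1 hlt).le
    rcases le_total p.2 (ym b) with h1 | h1
    · simpa using (h Tile.SW).1 ⟨p, hp, hx, h1⟩
    · rcases le_total p.2 (yp b) with h2 | h2
      · simpa using (h Tile.W).1 ⟨p, hp, hx, h1, h2⟩
      · simpa using (h Tile.NW).1 ⟨p, hp, hx, h2⟩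
  exact hsub (ha.1.2.2 ▸ hq)

/-- The bridging argument for a single literal: `w` and `w'` are the left and right neighbours of
the frame, `f` is the frame of the positive literal, and `g` is the frame of the literal itself. -/
lemma bridge {u f g w w' : Reg} {T T' : Set Tile} (hg : IsConnRegion g) (hw : IsConnRegion w)
    (hgf : xm g ≤ xm f) (hwf : cdc w T f) (hT : Tile.O ∈ T)
    (hgw : cdc g T' w') (hT' : Tile.O ∈ T') (hu : Horiz u g) :
    xm u < xp w ∧ xm w' < xp u := by
  obtain ⟨⟨hxm, hxp⟩, -⟩ := hu
  have h1 := xm_lt_xp_of_cdc hw hwf hT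
  have h2 := xm_lt_xp_of_cdc hg hgw hT'
  simp only at hxm hxp
  constructor <;> linarith

lemma fstar_conn {n : ℕ} {S : VAssign n} (hS : S.AllConn) (i : Fin n) (b : Bool) :
    IsConnRegion (fstar S i b) := by
  obtain ⟨-, -, hf, hfn, -⟩ := hS.1 i
  cases b
  · exact hfn
  · exact hf

lemma xm_fstar_le {n : ℕ} {S : VAssign n} (hS : S.AllConn) (h : S.Holds) (i : Fin n) (b : Bool) :
    xm (fstar S i b) ≤ xm (S.f i) := by
  obtain ⟨-, -, hf, -⟩ := hS.1 i
  obtain ⟨-, -, -, -, -, hO, -⟩ := h.1 i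
  cases b
  · exact xm_le_of_cdc_O hf hO
  · exact le_rfl

/-- Bridging: In any solution of `N_c` by connected regions, if
`u_r*` is horizontal w.r.t. its frame then `I_x(u_r*)` overlaps both
`I_x(w₀)` and `I_x(w_rs)`; and analogously for `u_s*` and `u_t*`. -/
theorem stmt12 {n : ℕ} (S : VAssign n) (c : Clause n) (C : CAssign)
    (hS : S.AllConn) (hC : C.AllConn) (h : NetC S c C) :
    (Horiz (ustar S c.r c.sr) (fstar S c.r c.sr) →
      xm (ustar S c.r c.sr) < xp C.w0 ∧ xm C.wrs < xp (ustar S c.r c.sr)) ∧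
    (Horiz (ustar S c.s c.ss) (fstar S c.s c.ss) →
      xm (ustar S c.s c.ss) < xp C.wrs ∧ xm C.wst < xp (ustar S c.s c.ss)) ∧
    (Horiz (ustar S c.t c.st) (fstar S c.t c.st) →
      xm (ustar S c.t c.st) < xp C.wst ∧ xm C.w1 < xp (ustar S c.t c.st)) := by
  obtain ⟨hV, -, -, h0, -, hr, hrs, -, hs, hst, -, ht, -⟩ := h
  obtain ⟨-, hw0, hwrs, hwst, -⟩ := hC
  -- Whatever the sign, the frame of a literal meets the central tile of its right neighbour.
  have hr' : ∃ T : Set Tile, cdc (fstar S c.r c.sr) T C.wrs ∧ Tile.O ∈ T := by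
    cases hb : c.sr <;> simp only [hb, fstar, if_true] at hr ⊢ <;>
      exact ⟨_, hr.1, by simp⟩
  have hs' : ∃ T : Set Tile, cdc (fstar S c.s c.ss) T C.wst ∧ Tile.O ∈ T := by
    cases hb : c.ss <;> simp only [hb, fstar, if_true] at hs ⊢ <;>
      exact ⟨_, hs.1, by simp⟩
  have ht' : ∃ T : Set Tile, cdc (fstar S c.t c.st) T C.w1 ∧ Tile.O ∈ T := by
    cases hb : c.st <;> simp only [hb, fstar, if_true] at ht ⊢ <;>
      exact ⟨_, ht.1, by simp⟩
  obtain ⟨_, hr1, hr2⟩ := hr'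
  obtain ⟨_, hs1, hs2⟩ := hs'
  obtain ⟨_, ht1, ht2⟩ := ht'
  exact ⟨bridge (fstar_conn hS _ _) hw0 (xm_fstar_le hS hV _ _) h0 (by simp) hr1 hr2,
    bridge (fstar_conn hS _ _) hwrs (xm_fstar_le hS hV _ _) hrs (by simp) hs1 hs2,
    bridge (fstar_conn hS _ _) hwst (xm_fstar_le hS hV _ _) hst (by simp) ht1 ht2⟩
end
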